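/- arXiv:0801.2567 — 2 statements merged into one kernel-verified Lean document; each statement's English description precedes it below -/
import Mathlib

section
/- For the group-algebra Frobenius algebra A = k[ℤ/2] over a field k, the space of Frobenius 1-cocycles Z¹_f(A;A) = {h : d^{1,1}(h)=0 and d^{1,2}(h)=0} has dimension 0 over k if char(k) ≠ 2, and dimension 1 over k if char(k) = 2 (in that case it is spanned by the k-linear map h with h(1) = 0 and h(g) = g). In particular H¹_f(A;A) = 0 if char(k) ≠ 2 and H¹_f(A;A) ≅ k if char(k) = 2. -/
open TensorProduct

noncomputable section

variable (k A : Type*) [Field k] [Ring A] [Algebra k A]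

/-- Multiplication `μ : A ⊗[k] A → A` as a `k`-linear map. -/
def mu : A ⊗[k] A →ₗ[k] A := LinearMap.mul' k A

/-- The standard associator `(A⊗A)⊗A ≃ A⊗(A⊗A)`. -/
def asso : ((A ⊗[k] A) ⊗[k] A) ≃ₗ[k] (A ⊗[k] (A ⊗[k] A)) := TensorProduct.assoc k A A A

/-- The flip `τ : A⊗A → A⊗A`, `x⊗y ↦ y⊗x`. -/
def tau : A ⊗[k] A →ₗ[k] A ⊗[k] A := (TensorProduct.comm k A A).toLinearMap

/-- A Frobenius structure on `A`: a coassociative comultiplication `Δ` satisfying the two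
Frobenius compatibility conditions `Δ∘μ = (μ⊗id)∘(id⊗Δ) = (id⊗μ)∘(Δ⊗id)`
(composites taken with the standard associator identifications). -/
def IsFrobenius (Δ : A →ₗ[k] A ⊗[k] A) : Prop :=
  (Δ.rTensor A ∘ₗ Δ = (asso k A).symm.toLinearMap ∘ₗ Δ.lTensor A ∘ₗ Δ) ∧
  (Δ ∘ₗ mu k A = (mu k A).rTensor A ∘ₗ (asso k A).symm.toLinearMap ∘ₗ Δ.lTensor A) ∧
  (Δ ∘ₗ mu k A = (mu k A).lTensor A ∘ₗ (asso k A).toLinearMap ∘ₗ Δ.rTensor A)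

/-- `R : A⊗A → A⊗A` satisfies the Yang–Baxter equation:
`(R⊗id)∘(id⊗R)∘(R⊗id) = (id⊗R)∘(R⊗id)∘(id⊗R)` on `A⊗A⊗A`
(with the standard associator identifications). -/
def YBE (R : A ⊗[k] A →ₗ[k] A ⊗[k] A) : Prop :=
  R.rTensor A ∘ₗ
      ((asso k A).symm.toLinearMap ∘ₗ R.lTensor A ∘ₗ (asso k A).toLinearMap) ∘ₗ
      R.rTensor A =
    ((asso k A).symm.toLinearMap ∘ₗ R.lTensor A ∘ₗ (asso k A).toLinearMap) ∘ₗ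
      R.rTensor A ∘ₗ
      ((asso k A).symm.toLinearMap ∘ₗ R.lTensor A ∘ₗ (asso k A).toLinearMap)

/-- `d^{1,1}(h) = μ∘(h⊗id) + μ∘(id⊗h) − h∘μ`. -/
def d11 (h : A →ₗ[k] A) : A ⊗[k] A →ₗ[k] A :=
  mu k A ∘ₗ h.rTensor A + mu k A ∘ₗ h.lTensor A - h ∘ₗ mu k A

/-- `d^{1,2}(h) = (h⊗id)∘Δ + (id⊗h)∘Δ − Δ∘h`. -/
def d12 (Δ : A →ₗ[k] A ⊗[k] A) (h : A →ₗ[k] A) : A →ₗ[k] A ⊗[k] A :=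
  h.rTensor A ∘ₗ Δ + h.lTensor A ∘ₗ Δ - Δ ∘ₗ h

/-- `d^{2,1}(φ₁) = μ∘(φ₁⊗id) + φ₁∘(μ⊗id) − μ∘(id⊗φ₁) − φ₁∘(id⊗μ)`. -/
def d21 (φ₁ : A ⊗[k] A →ₗ[k] A) : ((A ⊗[k] A) ⊗[k] A) →ₗ[k] A :=
  mu k A ∘ₗ φ₁.rTensor A + φ₁ ∘ₗ (mu k A).rTensor A
  - mu k A ∘ₗ φ₁.lTensor A ∘ₗ (asso k A).toLinearMap
  - φ₁ ∘ₗ (mu k A).lTensor A ∘ₗ (asso k A).toLinearMap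

/-- `d^{2,2}_{(1)}(φ₁,φ₂) = Δ∘φ₁ + φ₂∘μ − (φ₁⊗id)∘(id⊗Δ) − (μ⊗id)∘(id⊗φ₂)`. -/
def d221 (Δ : A →ₗ[k] A ⊗[k] A) (φ₁ : A ⊗[k] A →ₗ[k] A) (φ₂ : A →ₗ[k] A ⊗[k] A) :
    A ⊗[k] A →ₗ[k] A ⊗[k] A :=
  Δ ∘ₗ φ₁ + φ₂ ∘ₗ mu k A
  - φ₁.rTensor A ∘ₗ (asso k A).symm.toLinearMap ∘ₗ Δ.lTensor A
  - (mu k A).rTensor A ∘ₗ (asso k A).symm.toLinearMap ∘ₗ φ₂.lTensor A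

/-- `d^{2,2}_{(2)}(φ₁,φ₂) = Δ∘φ₁ + φ₂∘μ − (id⊗φ₁)∘(Δ⊗id) − (id⊗μ)∘(φ₂⊗id)`. -/
def d222 (Δ : A →ₗ[k] A ⊗[k] A) (φ₁ : A ⊗[k] A →ₗ[k] A) (φ₂ : A →ₗ[k] A ⊗[k] A) :
    A ⊗[k] A →ₗ[k] A ⊗[k] A :=
  Δ ∘ₗ φ₁ + φ₂ ∘ₗ mu k A
  - φ₁.lTensor A ∘ₗ (asso k A).toLinearMap ∘ₗ Δ.rTensor A
  - (mu k A).lTensor A ∘ₗ (asso k A).toLinearMap ∘ₗ φ₂.rTensor A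

/-- `d^{2,3}(φ₂) = (φ₂⊗id)∘Δ + (Δ⊗id)∘φ₂ − (id⊗φ₂)∘Δ − (id⊗Δ)∘φ₂`. -/
def d23 (Δ : A →ₗ[k] A ⊗[k] A) (φ₂ : A →ₗ[k] A ⊗[k] A) :
    A →ₗ[k] (A ⊗[k] A) ⊗[k] A :=
  φ₂.rTensor A ∘ₗ Δ + Δ.rTensor A ∘ₗ φ₂
  - (asso k A).symm.toLinearMap ∘ₗ φ₂.lTensor A ∘ₗ Δ
  - (asso k A).symm.toLinearMap ∘ₗ Δ.lTensor A ∘ₗ φ₂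

/-- The group algebra `k[ℤ/2]`. -/
abbrev GroupAlg (K : Type*) [Field K] := MonoidAlgebra K (Multiplicative (ZMod 2))

/-- The generator `g` of `ℤ/2` inside `k[ℤ/2]`. -/
def gElt (K : Type*) [Field K] : GroupAlg K :=
  MonoidAlgebra.of K (Multiplicative (ZMod 2)) (Multiplicative.ofAdd (1 : ZMod 2))

/-!
The Leibniz rule `d11 h = 0` says exactly that `h 1 = 0` and `2 • h g = 0`, the second equation
coming from `g ^ 2 = 1`. Given these, the value of `d12 h` at `1` is `h g ⊗ g + g ⊗ h g`;
contracting it with the Frobenius form shows that it vanishes exactly when `h g` is a multiple of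
`g`, and then `d12 h` vanishes at `g` as well. So a cocycle `h` is given by a scalar `c` with
`2 * c = 0`.
-/

section Cocycle

variable {k A}

theorem d11_tmul (h : A →ₗ[k] A) (a b : A) :
    d11 k A h (a ⊗ₜ b) = h a * b + a * h b - h (a * b) := by
  simp [d11, mu]

theorem d12_apply (Δ : A →ₗ[k] A ⊗[k] A) (h : A →ₗ[k] A) (a : A) :
    d12 k A Δ h a = h.rTensor A (Δ a) + h.lTensor A (Δ a) - Δ (h a) :=
  rfl

theorem exists_derivation_of_d11_eq_zero {B : Type*} [CommRing B] [Algebra k B] {h : B →ₗ[k] B}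
    (hh : d11 k B h = 0) : ∃ D : Derivation k B B, (D : B →ₗ[k] B) = h := by
  refine ⟨Derivation.mk' h fun a b ↦ ?_, Derivation.coe_mk'_linearMap h _⟩
  have leibniz : h a * b + a * h b - h (a * b) = 0 := by
    rw [← d11_tmul, hh, LinearMap.zero_apply]
  rw [← sub_eq_zero.mp leibniz, smul_eq_mul, smul_eq_mul, mul_comm b, add_comm]

end Cocycle

theorem nsmul_derivation_eq_zero_of_pow_eq_one {R B M : Type*} [CommSemiring R] [CommSemiring B]
    [AddCommMonoid M] [IsCancelAdd M] [Algebra R B] [Module B M] [Module R M]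
    (D : Derivation R B M) {a : B} {n : ℕ} (ha : a ^ n = 1) : n • D a = 0 := by
  obtain _ | n := n
  · exact zero_nsmul _
  · calc (n + 1) • D a = a • D (a ^ (n + 1)) := by
          rw [D.leibniz_pow, Nat.add_sub_cancel, smul_comm, smul_smul, ← pow_succ', ha, one_smul]
      _ = 0 := by rw [ha, D.map_one_eq_zero, smul_zero]

section GroupAlg

variable {K : Type*} [Field K]

theorem gElt_mul_self : gElt K * gElt K = 1 := by
  rw [gElt, ← map_mul, ← map_one (MonoidAlgebra.of K (Multiplicative (ZMod 2)))]
  rfl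

theorem groupAlg_linearMap_ext {M : Type*} [AddCommMonoid M] [Module K M]
    {f f' : GroupAlg K →ₗ[K] M} (h1 : f 1 = f' 1) (hg : f (gElt K) = f' (gElt K)) : f = f' := by
  refine (MonoidAlgebra.basis (Multiplicative (ZMod 2)) K).ext fun u ↦ ?_
  have hu : u = 1 ∨ u = Multiplicative.ofAdd (1 : ZMod 2) := by revert u; decide
  rw [MonoidAlgebra.basis_apply]
  obtain rfl | rfl := hu
  · exact h1
  · exact hg

variable (K) in
/-- The Frobenius form `ε` of `k[ℤ/2]`, reading off the coefficient of `1`; it is the counit of the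
comultiplication with `Δ 1 = 1 ⊗ 1 + g ⊗ g`. -/
def frobeniusForm : GroupAlg K →ₗ[K] K :=
  (MonoidAlgebra.basis (Multiplicative (ZMod 2)) K).coord 1

theorem frobeniusForm_one : frobeniusForm K 1 = 1 := by
  simp [frobeniusForm, MonoidAlgebra.basis]

theorem frobeniusForm_gElt : frobeniusForm K (gElt K) = 0 := by
  simp [frobeniusForm, MonoidAlgebra.basis, gElt]

theorem gElt_ne_zero : gElt K ≠ 0 :=
  left_ne_zero_of_mul_eq_one gElt_mul_self

theorem frobeniusForm_smul_one_add_smul_gElt (x : GroupAlg K) :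
    frobeniusForm K x • 1 + frobeniusForm K (gElt K * x) • gElt K = x := by
  have decomposition : (frobeniusForm K).smulRight 1 +
      (frobeniusForm K ∘ₗ LinearMap.mulLeft K (gElt K)).smulRight (gElt K) = LinearMap.id :=
    groupAlg_linearMap_ext
      (by simp [frobeniusForm_one, frobeniusForm_gElt])
      (by simp [frobeniusForm_one, frobeniusForm_gElt, gElt_mul_self])
  exact LinearMap.congr_fun decomposition x

theorem ker_frobeniusForm : LinearMap.ker (frobeniusForm K) = K ∙ gElt K := by
  refine le_antisymm
    (fun x hx ↦ Submodule.mem_span_singleton.mpr ⟨frobeniusForm K (gElt K * x), ?_⟩)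
    ((Submodule.span_singleton_le_iff_mem _ _).mpr frobeniusForm_gElt)
  simpa only [LinearMap.mem_ker.mp hx, zero_smul, zero_add]
    using frobeniusForm_smul_one_add_smul_gElt x

theorem d11_groupAlg_eq_zero_iff {h : GroupAlg K →ₗ[K] GroupAlg K} :
    d11 K (GroupAlg K) h = 0 ↔ h 1 = 0 ∧ 2 • h (gElt K) = 0 := by
  constructor
  · intro hh
    obtain ⟨D, rfl⟩ := exists_derivation_of_d11_eq_zero hh
    exact ⟨D.map_one_eq_zero,
      nsmul_derivation_eq_zero_of_pow_eq_one D ((sq _).trans gElt_mul_self)⟩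
  · rintro ⟨h1, hg⟩
    have at_g_g : h (gElt K) * gElt K + gElt K * h (gElt K) = 0 := by
      rw [mul_comm, ← two_nsmul, ← mul_smul_comm, hg, mul_zero]
    refine TensorProduct.ext (groupAlg_linearMap_ext ?_ ?_) <;>
      refine groupAlg_linearMap_ext ?_ ?_ <;>
      simp [d11_tmul, h1, gElt_mul_self, at_g_g]

theorem mem_span_gElt_of_tmul_gElt_add_gElt_tmul_eq_zero {x : GroupAlg K}
    (hx : x ⊗ₜ[K] gElt K + gElt K ⊗ₜ[K] x = 0) : x ∈ K ∙ gElt K := by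
  have contraction : frobeniusForm K x • gElt K = 0 := by
    simpa [frobeniusForm_gElt] using
      congrArg (TensorProduct.lid K (GroupAlg K) ∘ (frobeniusForm K).rTensor (GroupAlg K)) hx
  rw [← ker_frobeniusForm]
  exact (smul_eq_zero.mp contraction).resolve_right gElt_ne_zero

theorem d12_groupAlg_eq_zero_iff {Δ : GroupAlg K →ₗ[K] GroupAlg K ⊗[K] GroupAlg K}
    (hΔ1 : Δ 1 = (1 : GroupAlg K) ⊗ₜ[K] (1 : GroupAlg K) + gElt K ⊗ₜ[K] gElt K)
    (hΔg : Δ (gElt K) = (1 : GroupAlg K) ⊗ₜ[K] gElt K + gElt K ⊗ₜ[K] (1 : GroupAlg K))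
    {h : GroupAlg K →ₗ[K] GroupAlg K} (h1 : h 1 = 0) (hg : 2 • h (gElt K) = 0) :
    d12 K (GroupAlg K) Δ h = 0 ↔ h (gElt K) ∈ K ∙ gElt K := by
  have at_one : d12 K (GroupAlg K) Δ h 1 =
      h (gElt K) ⊗ₜ[K] gElt K + gElt K ⊗ₜ[K] h (gElt K) := by
    simp [d12_apply, hΔ1, h1]
  constructor
  · intro hh
    apply mem_span_gElt_of_tmul_gElt_add_gElt_tmul_eq_zero
    rw [← at_one, hh, LinearMap.zero_apply]
  · intro hmem
    obtain ⟨c, hc⟩ := Submodule.mem_span_singleton.mp hmem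
    apply groupAlg_linearMap_ext
    · rw [at_one, ← hc, ← smul_tmul, hc, ← two_nsmul, smul_tmul', hg, zero_tmul,
        LinearMap.zero_apply]
    · simp [d12_apply, hΔg, h1, ← hc, smul_tmul', add_comm]

theorem mem_span_singleton_iff_of_apply_one_of_apply_gElt {h₀ h : GroupAlg K →ₗ[K] GroupAlg K}
    (h₀1 : h₀ 1 = 0) (h₀g : h₀ (gElt K) = gElt K) :
    h ∈ K ∙ h₀ ↔ h 1 = 0 ∧ h (gElt K) ∈ K ∙ gElt K := by
  simp only [Submodule.mem_span_singleton]
  constructor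
  · rintro ⟨c, rfl⟩
    exact ⟨by rw [LinearMap.smul_apply, h₀1, smul_zero], c, by rw [LinearMap.smul_apply, h₀g]⟩
  · rintro ⟨h1, c, hc⟩
    exact ⟨c, groupAlg_linearMap_ext (by rw [LinearMap.smul_apply, h₀1, smul_zero, h1])
      (by rw [LinearMap.smul_apply, h₀g, hc])⟩

theorem eq_zero_of_d11_groupAlg_eq_zero (hK : ringChar K ≠ 2) {h : GroupAlg K →ₗ[K] GroupAlg K}
    (hh : d11 K (GroupAlg K) h = 0) : h = 0 := by
  obtain ⟨h1, hg⟩ := d11_groupAlg_eq_zero_iff.mp hh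
  rw [← Nat.cast_smul_eq_nsmul K] at hg
  exact groupAlg_linearMap_ext h1
    ((smul_eq_zero.mp hg).resolve_left (Ring.two_ne_zero hK))

theorem two_nsmul_groupAlg_eq_zero (hK : ringChar K = 2) (x : GroupAlg K) : 2 • x = 0 := by
  have : CharP K 2 := ringChar.of_eq hK
  have : CharP (GroupAlg K) 2 := charP_of_injective_algebraMap' K 2
  exact CharTwo.two_nsmul x

end GroupAlg

/-- for the group-algebra Frobenius algebra `A = k[ℤ/2]` (with
`Δ(1) = 1⊗1 + g⊗g`, `Δ(g) = 1⊗g + g⊗1`), the space of Frobenius 1-cocycles is `0` if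
`char k ≠ 2`, and is 1-dimensional, spanned by the map `h₀` with `h₀(1) = 0`, `h₀(g) = g`,
if `char k = 2` (hence `H¹_f = 0` resp. `H¹_f ≅ k`). -/
theorem groupAlgebra_Z1 (K : Type*) [Field K]
    (Δ : GroupAlg K →ₗ[K] GroupAlg K ⊗[K] GroupAlg K)
    (hΔ1 : Δ 1 = (1 : GroupAlg K) ⊗ₜ[K] (1 : GroupAlg K) + gElt K ⊗ₜ[K] gElt K)
    (hΔg : Δ (gElt K) = (1 : GroupAlg K) ⊗ₜ[K] gElt K + gElt K ⊗ₜ[K] (1 : GroupAlg K)) :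
    (ringChar K ≠ 2 →
      ∀ h : GroupAlg K →ₗ[K] GroupAlg K,
        d11 K (GroupAlg K) h = 0 → d12 K (GroupAlg K) Δ h = 0 → h = 0) ∧
    (ringChar K = 2 →
      ∀ h₀ : GroupAlg K →ₗ[K] GroupAlg K, h₀ 1 = 0 → h₀ (gElt K) = gElt K →
        ∀ h : GroupAlg K →ₗ[K] GroupAlg K,
          (d11 K (GroupAlg K) h = 0 ∧ d12 K (GroupAlg K) Δ h = 0) ↔
          h ∈ Submodule.span K {h₀}) := by
  refine ⟨fun hK h hh _ ↦ eq_zero_of_d11_groupAlg_eq_zero hK hh, fun hK h₀ h₀1 h₀g h ↦ ?_⟩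
  have hg : 2 • h (gElt K) = 0 := two_nsmul_groupAlg_eq_zero hK _
  have leibniz_iff : d11 K (GroupAlg K) h = 0 ↔ h 1 = 0 :=
    d11_groupAlg_eq_zero_iff.trans (and_iff_left hg)
  rw [leibniz_iff, mem_span_singleton_iff_of_apply_one_of_apply_gElt h₀1 h₀g]
  exact and_congr_right fun h1 ↦ d12_groupAlg_eq_zero_iff hΔ1 hΔg h1 hg
end
end

section
/- (Frobenius skein solutions, case C = T = 0.) Let A be an associative unital k-algebra with a Frobenius structure Δ and counit ε; set β = ε∘μ : A⊗A → k, γ : k → A⊗A the map with γ(1) = Δ(1), and δ₀ = β(Δ(1)) ∈ k. Let a, b, a', b' ∈ k and put R = a·id_{A⊗A} + b·(γ∘β) and R' = a'·id_{A⊗A} + b'·(γ∘β). If a² + b² + δ₀ab = 0 then R satisfies the Yang–Baxter equation; if a'² + b'² + δ₀a'b' = 0 then R' satisfies the Yang–Baxter equation; and if ab' + a'b + δ₀bb' = 0 then R'∘R = (aa')·id_{A⊗A} (so R' is a two-sided inverse of R whenever in addition aa' = 1). -/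
open TensorProduct

noncomputable section

variable (k A : Type*) [Field k] [Ring A] [Algebra k A]

/-- `ε` is a counit for `Δ`: `(ε⊗id)∘Δ = id = (id⊗ε)∘Δ`. -/
def IsCounit (Δ : A →ₗ[k] A ⊗[k] A) (ε : A →ₗ[k] k) : Prop :=
  (TensorProduct.lid k A).toLinearMap ∘ₗ ε.rTensor A ∘ₗ Δ = LinearMap.id ∧
  (TensorProduct.rid k A).toLinearMap ∘ₗ ε.lTensor A ∘ₗ Δ = LinearMap.id

/-- The Frobenius structure `(Δ, ε)` is symmetric: `ε(xy) = ε(yx)` for all `x, y`, and the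
copairing is symmetric, `τ(Δ(1)) = Δ(1)`. -/
def IsSymmetric (Δ : A →ₗ[k] A ⊗[k] A) (ε : A →ₗ[k] k) : Prop :=
  (∀ x y : A, ε (x * y) = ε (y * x)) ∧ tau k A (Δ 1) = Δ 1

/-!
The pairing `β = ε ∘ μ` and the copairing `Δ 1` satisfy the two zigzag identities: they exhibit `A`
as its own dual. Hence `e = γ ∘ β` satisfies `e² = δ₀ e`, and on `A ⊗ A ⊗ A` the operators
`X = e ⊗ id` and `Y = id ⊗ e` generate a Temperley–Lieb algebra: `X Y X = X` and `Y X Y = Y`.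
Expanding both sides of the Yang–Baxter equation for `a + b e`, everything that is not symmetric in
`X` and `Y` is `b (a² + b² + δ₀ a b)` times `X`, respectively times `Y`.
-/

section TemperleyLieb

variable {R B : Type*} [CommSemiring R] [Semiring B] [Algebra R B] {δ : R} {X Y e : B}

theorem skein_mul_skein_mul_skein (hX : X * X = δ • X) (hXYX : X * (Y * X) = X) (a b : R) :
    (a • 1 + b • X) * ((a • 1 + b • Y) * (a • 1 + b • X)) =
      a ^ 3 • 1 + (a ^ 2 * b) • (X + Y) + (a * b ^ 2) • (X * Y + Y * X) +
        (b * (a ^ 2 + b ^ 2 + δ * a * b)) • X := by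
  simp only [mul_add, add_mul, smul_mul_assoc, mul_smul_comm, one_mul, mul_one, hX, hXYX,
    smul_smul, smul_add]
  module

theorem skein_braid_relation (hX : X * X = δ • X) (hY : Y * Y = δ • Y)
    (hXYX : X * (Y * X) = X) (hYXY : Y * (X * Y) = Y)
    {a b : R} (h : a ^ 2 + b ^ 2 + δ * a * b = 0) :
    (a • 1 + b • X) * ((a • 1 + b • Y) * (a • 1 + b • X)) =
      (a • 1 + b • Y) * ((a • 1 + b • X) * (a • 1 + b • Y)) := by
  rw [skein_mul_skein_mul_skein hX hXYX, skein_mul_skein_mul_skein hY hYXY, h, add_comm X Y,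
    add_comm (X * Y), mul_zero, zero_smul, zero_smul]

theorem skein_mul_skein_of_eq_zero (he : e * e = δ • e) {a b a' b' : R}
    (h : a * b' + a' * b + δ * b * b' = 0) :
    (a' • 1 + b' • e) * (a • 1 + b • e) = (a * a') • (1 : B) :=
  calc (a' • 1 + b' • e) * (a • 1 + b • e)
      = (a * a') • (1 : B) + (a * b' + a' * b + δ * b * b') • e := by
        simp only [mul_add, add_mul, smul_mul_assoc, mul_smul_comm, one_mul, mul_one, he, smul_smul]
        module
    _ = (a * a') • (1 : B) := by rw [h, zero_smul, add_zero]

end TemperleyLieb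

section SelfDuality

variable {R M : Type*} [CommSemiring R] [AddCommMonoid M] [Module R M]

/-- The action `T ↦ T ⊗ id` of endomorphisms of `M ⊗ M` on the first two factors of
`(M ⊗ M) ⊗ M`. -/
def onFirstTwo : Module.End R (M ⊗[R] M) →ₐ[R] Module.End R ((M ⊗[R] M) ⊗[R] M) :=
  Module.End.rTensorAlgHom R (M ⊗[R] M) M

/-- The action `T ↦ id ⊗ T` of endomorphisms of `M ⊗ M` on the last two factors of
`(M ⊗ M) ⊗ M`, transported along the associator. -/
def onLastTwo : Module.End R (M ⊗[R] M) →ₐ[R] Module.End R ((M ⊗[R] M) ⊗[R] M) :=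
  ((TensorProduct.assoc R M M M).symm.conjAlgEquiv R).toAlgHom.comp
    (Module.End.lTensorAlgHom R (M ⊗[R] M) M)

theorem onFirstTwo_apply (T : Module.End R (M ⊗[R] M)) : onFirstTwo T = T.rTensor M :=
  rfl

theorem onLastTwo_apply (T : Module.End R (M ⊗[R] M)) :
    onLastTwo T = (TensorProduct.assoc R M M M).symm.toLinearMap ∘ₗ T.lTensor M ∘ₗ
      (TensorProduct.assoc R M M M).toLinearMap :=
  rfl

/-- The Yang–Baxter equation for an endomorphism of `M ⊗ M`, where `M` is any module; for the
underlying module of an algebra over a field it is `YBE`. -/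
def IsYangBaxter (T : Module.End R (M ⊗[R] M)) : Prop :=
  onFirstTwo T * (onLastTwo T * onFirstTwo T) = onLastTwo T * (onFirstTwo T * onLastTwo T)

/-- The cap `β ⊗ id`, contracting the first two of three factors. -/
def capLeft (β : M ⊗[R] M →ₗ[R] R) : (M ⊗[R] M) ⊗[R] M →ₗ[R] M :=
  (TensorProduct.lid R M).toLinearMap ∘ₗ β.rTensor M

/-- The cap `id ⊗ β`, contracting the last two of three factors. -/
def capRight (β : M ⊗[R] M →ₗ[R] R) : (M ⊗[R] M) ⊗[R] M →ₗ[R] M :=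
  (TensorProduct.rid R M).toLinearMap ∘ₗ β.lTensor M ∘ₗ (TensorProduct.assoc R M M M).toLinearMap

/-- The cup `z ↦ c ⊗ z`, inserting `c` as the first two of three factors. -/
def cupLeft (c : M ⊗[R] M) : M →ₗ[R] (M ⊗[R] M) ⊗[R] M :=
  TensorProduct.mk R (M ⊗[R] M) M c

/-- The cup `z ↦ z ⊗ c`, inserting `c` as the last two of three factors. -/
def cupRight (c : M ⊗[R] M) : M →ₗ[R] (M ⊗[R] M) ⊗[R] M :=
  (TensorProduct.assoc R M M M).symm.toLinearMap ∘ₗ (TensorProduct.mk R M (M ⊗[R] M)).flip c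

/-- The pairing `β` and the copairing `c` exhibit `M` as its own dual: they satisfy the two zigzag
identities. -/
structure IsSelfDuality (β : M ⊗[R] M →ₗ[R] R) (c : M ⊗[R] M) : Prop where
  capLeft_comp_cupRight : capLeft β ∘ₗ cupRight c = LinearMap.id
  capRight_comp_cupLeft : capRight β ∘ₗ cupLeft c = LinearMap.id

theorem smulRight_mul_self (β : M ⊗[R] M →ₗ[R] R) (c : M ⊗[R] M) :
    (β.smulRight c * β.smulRight c : Module.End R (M ⊗[R] M)) = β c • β.smulRight c := by
  ext x y
  simp [smul_smul, mul_comm]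

theorem onFirstTwo_smulRight (β : M ⊗[R] M →ₗ[R] R) (c : M ⊗[R] M) :
    onFirstTwo (β.smulRight c) = cupLeft c ∘ₗ capLeft β := by
  ext x y z
  simp [onFirstTwo_apply, cupLeft, capLeft, TensorProduct.smul_tmul']

theorem onLastTwo_smulRight (β : M ⊗[R] M →ₗ[R] R) (c : M ⊗[R] M) :
    onLastTwo (β.smulRight c) = cupRight c ∘ₗ capRight β := by
  ext x y z
  simp [onLastTwo_apply, cupRight, capRight]

namespace IsSelfDuality

variable {β : M ⊗[R] M →ₗ[R] R} {c : M ⊗[R] M}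

theorem onFirstTwo_mul_onLastTwo_mul_onFirstTwo (h : IsSelfDuality β c) :
    onFirstTwo (β.smulRight c) * (onLastTwo (β.smulRight c) * onFirstTwo (β.smulRight c)) =
      onFirstTwo (β.smulRight c) := by
  rw [onFirstTwo_smulRight, onLastTwo_smulRight]
  calc (cupLeft c ∘ₗ capLeft β) ∘ₗ (cupRight c ∘ₗ capRight β) ∘ₗ (cupLeft c ∘ₗ capLeft β)
      = cupLeft c ∘ₗ (capLeft β ∘ₗ cupRight c) ∘ₗ (capRight β ∘ₗ cupLeft c) ∘ₗ capLeft β := rfl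
    _ = cupLeft c ∘ₗ capLeft β := by
      rw [h.capLeft_comp_cupRight, h.capRight_comp_cupLeft, LinearMap.id_comp, LinearMap.id_comp]

theorem onLastTwo_mul_onFirstTwo_mul_onLastTwo (h : IsSelfDuality β c) :
    onLastTwo (β.smulRight c) * (onFirstTwo (β.smulRight c) * onLastTwo (β.smulRight c)) =
      onLastTwo (β.smulRight c) := by
  rw [onFirstTwo_smulRight, onLastTwo_smulRight]
  calc (cupRight c ∘ₗ capRight β) ∘ₗ (cupLeft c ∘ₗ capLeft β) ∘ₗ (cupRight c ∘ₗ capRight β)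
      = cupRight c ∘ₗ (capRight β ∘ₗ cupLeft c) ∘ₗ (capLeft β ∘ₗ cupRight c) ∘ₗ capRight β := rfl
    _ = cupRight c ∘ₗ capRight β := by
      rw [h.capLeft_comp_cupRight, h.capRight_comp_cupLeft, LinearMap.id_comp, LinearMap.id_comp]

theorem isYangBaxter_skein (h : IsSelfDuality β c) {a b : R}
    (hab : a ^ 2 + b ^ 2 + β c * a * b = 0) :
    IsYangBaxter (a • LinearMap.id + b • β.smulRight c) := by
  have map_mul_self (f : Module.End R (M ⊗[R] M) →ₐ[R] Module.End R ((M ⊗[R] M) ⊗[R] M)) :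
      f (β.smulRight c) * f (β.smulRight c) = β c • f (β.smulRight c) := by
    rw [← map_mul, smulRight_mul_self, map_smul]
  simp only [IsYangBaxter, ← Module.End.one_eq_id, map_add, map_smul, map_one]
  exact skein_braid_relation (map_mul_self _) (map_mul_self _)
    h.onFirstTwo_mul_onLastTwo_mul_onFirstTwo h.onLastTwo_mul_onFirstTwo_mul_onLastTwo hab

end IsSelfDuality

theorem frobenius_skein_case_CT_zero_general {β : M ⊗[R] M →ₗ[R] R} {c : M ⊗[R] M}
    (h : IsSelfDuality β c) (a b a' b' : R) :
    (a ^ 2 + b ^ 2 + β c * a * b = 0 →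
      IsYangBaxter (a • LinearMap.id + b • β.smulRight c)) ∧
    (a' ^ 2 + b' ^ 2 + β c * a' * b' = 0 →
      IsYangBaxter (a' • LinearMap.id + b' • β.smulRight c)) ∧
    (a * b' + a' * b + β c * b * b' = 0 →
      (a' • LinearMap.id + b' • β.smulRight c) ∘ₗ (a • LinearMap.id + b • β.smulRight c) =
        (a * a') • (LinearMap.id : M ⊗[R] M →ₗ[R] M ⊗[R] M)) :=
  ⟨h.isYangBaxter_skein, h.isYangBaxter_skein,
    skein_mul_skein_of_eq_zero (smulRight_mul_self β c)⟩

end SelfDuality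

section Frobenius

variable {k A} {Δ : A →ₗ[k] A ⊗[k] A} {ε : A →ₗ[k] k}

theorem rTensor_mu_tmul_comul_one
    (hΔ : Δ ∘ₗ mu k A = (mu k A).rTensor A ∘ₗ (asso k A).symm.toLinearMap ∘ₗ Δ.lTensor A) (z : A) :
    (mu k A).rTensor A ((asso k A).symm (z ⊗ₜ[k] Δ 1)) = Δ z := by
  simpa [mu] using (LinearMap.congr_fun hΔ (z ⊗ₜ[k] 1)).symm

theorem lTensor_mu_comul_one_tmul
    (hΔ : Δ ∘ₗ mu k A = (mu k A).lTensor A ∘ₗ (asso k A).toLinearMap ∘ₗ Δ.rTensor A) (z : A) :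
    (mu k A).lTensor A (asso k A (Δ 1 ⊗ₜ[k] z)) = Δ z := by
  simpa [mu] using (LinearMap.congr_fun hΔ (1 ⊗ₜ[k] z)).symm

theorem IsFrobenius.isSelfDuality (hΔ : IsFrobenius k A Δ) (hε : IsCounit k A Δ ε) :
    IsSelfDuality (ε ∘ₗ mu k A) (Δ 1) where
  capLeft_comp_cupRight := by
    ext z
    calc (TensorProduct.lid k A) ((ε ∘ₗ mu k A).rTensor A ((asso k A).symm (z ⊗ₜ[k] Δ 1)))
        = (TensorProduct.lid k A) (ε.rTensor A (Δ z)) := by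
          rw [LinearMap.rTensor_comp_apply, rTensor_mu_tmul_comul_one hΔ.2.1]
      _ = z := LinearMap.congr_fun hε.1 z
  capRight_comp_cupLeft := by
    ext z
    calc (TensorProduct.rid k A) ((ε ∘ₗ mu k A).lTensor A (asso k A (Δ 1 ⊗ₜ[k] z)))
        = (TensorProduct.rid k A) (ε.lTensor A (Δ z)) := by
          rw [LinearMap.lTensor_comp_apply, lTensor_mu_comul_one_tmul hΔ.2.2]
      _ = z := LinearMap.congr_fun hε.2 z

end Frobenius

/-- Frobenius skein solutions, case `C = T = 0`: with `β = ε∘μ`,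
`γ(1) = Δ(1)`, `δ₀ = β(Δ(1))`, and `R = a·id + b·(γ∘β)`, `R' = a'·id + b'·(γ∘β)`:
if `a² + b² + δ₀ab = 0` then `R` satisfies the YBE; if `a'² + b'² + δ₀a'b' = 0` then `R'`
satisfies the YBE; and if `ab' + a'b + δ₀bb' = 0` then `R'∘R = (aa')·id`. -/
theorem frobenius_skein_case_CT_zero (Δ : A →ₗ[k] A ⊗[k] A) (ε : A →ₗ[k] k)
    (hΔ : IsFrobenius k A Δ) (hε : IsCounit k A Δ ε)
    (a b a' b' : k) :
    (a ^ 2 + b ^ 2 + (ε ∘ₗ mu k A) (Δ 1) * a * b = 0 →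
      YBE k A (a • LinearMap.id + b • (ε ∘ₗ mu k A).smulRight (Δ 1))) ∧
    (a' ^ 2 + b' ^ 2 + (ε ∘ₗ mu k A) (Δ 1) * a' * b' = 0 →
      YBE k A (a' • LinearMap.id + b' • (ε ∘ₗ mu k A).smulRight (Δ 1))) ∧
    (a * b' + a' * b + (ε ∘ₗ mu k A) (Δ 1) * b * b' = 0 →
      (a' • LinearMap.id + b' • (ε ∘ₗ mu k A).smulRight (Δ 1)) ∘ₗ
        (a • LinearMap.id + b • (ε ∘ₗ mu k A).smulRight (Δ 1)) =
      (a * a') • (LinearMap.id : A ⊗[k] A →ₗ[k] A ⊗[k] A)) :=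
  frobenius_skein_case_CT_zero_general (hΔ.isSelfDuality hε) a b a' b'
end
end
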